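/- Let f₀ and f₁ be the densities of the multivariate Gaussian distributions N(m₀, Σ₀) and N(m₁, Σ₁) on ℝ^d, with Σ₀, Σ₁ symmetric positive definite, let h ≠ 0 be a real number, and define the generalized score S(y) := (1/h) ln(f₁(y)/f₀(y)). If y is distributed according to N(m₀, Σ₀), then the generalized Fisher information, defined as E[(S(y) − E[S(y)])²], equals (1/h²)·[ (1/2)·tr((A Σ₀)²) + bᵀ Σ₀ b + m₀ᵀ A Σ₀ A m₀ − 2·m₀ᵀ A Σ₀ b ], where A := Σ₁⁻¹ − Σ₀⁻¹ and b := Σ₁⁻¹ m₁ − Σ₀⁻¹ m₀. -/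

import Mathlib

open Matrix MeasureTheory

/-- Density of the multivariate Gaussian `N(μ, Σ)` on `ℝ^d`. -/
noncomputable def gaussianDensity {d : ℕ} (μ : Fin d → ℝ)
    (S : Matrix (Fin d) (Fin d) ℝ) (w : Fin d → ℝ) : ℝ :=
  (2 * Real.pi) ^ (-(d : ℝ) / 2) * S.det ^ (-(1 : ℝ) / 2) *
    Real.exp (-(1 / 2) * ((w - μ) ⬝ᵥ S⁻¹.mulVec (w - μ)))

/-- Generalized score function for two Gaussian densities and test point `h`. -/
noncomputable def genScore {d : ℕ} (m₀ m₁ : Fin d → ℝ)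
    (S₀ S₁ : Matrix (Fin d) (Fin d) ℝ) (h : ℝ) (y : Fin d → ℝ) : ℝ :=
  (1 / h) * Real.log (gaussianDensity m₁ S₁ y / gaussianDensity m₀ S₀ y)

/-
Expanding the score at `m₀` gives `S(y) = S(m₀) - (1/h) (½ xᵀ A x + (A m₀ - b)ᵀ x)` with
`x = y - m₀`, and the claim computes its variance. Choose `L` with `L Lᵀ = Σ₀` and `Lᵀ A L`
diagonal, with entries `Dᵢ`. Since `N(m₀, Σ₀)` is the law of `m₀ + L z` for a standard Gaussian `z`,
the quadratic polynomial becomes a sum of independent terms `½ Dᵢ zᵢ² + cᵢ zᵢ`, where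
`c = Lᵀ (A m₀ - b)`; each has variance `½ Dᵢ² + cᵢ²`, by moments computed from Stein's identity.
-/

open ProbabilityTheory
open scoped NNReal

section RealGaussian

variable {μ : ℝ} {v : ℝ≥0}

lemma hasDerivAt_gaussianPDFReal (hv : v ≠ 0) (x : ℝ) :
    HasDerivAt (gaussianPDFReal μ v) (-((x - μ) / v) * gaussianPDFReal μ v x) x := by
  have hexponent : HasDerivAt (fun y ↦ -(y - μ) ^ 2 / (2 * v)) (-((x - μ) / v)) x := by
    refine ((((hasDerivAt_id x).sub_const μ).pow 2).neg.div_const (2 * (v : ℝ))).congr_deriv ?_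
    have : (v : ℝ) ≠ 0 := mod_cast hv
    simp only [id]
    field_simp
    ring
  rw [gaussianPDFReal_def]
  exact (hexponent.exp.const_mul _).congr_deriv (by ring)

lemma integrable_gaussianReal_iff (hv : v ≠ 0) {f : ℝ → ℝ} :
    Integrable f (gaussianReal μ v) ↔ Integrable (fun x ↦ f x * gaussianPDFReal μ v x) := by
  rw [gaussianReal_of_var_ne_zero μ hv, integrable_withDensity_iff (measurable_gaussianPDF μ v)
    (ae_of_all _ fun _ ↦ gaussianPDF_lt_top)]
  simp only [toReal_gaussianPDF]

lemma stein_identity_gaussianReal {f f' : ℝ → ℝ} (hf : ∀ x, HasDerivAt f (f' x) x)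
    (hf_int : Integrable f (gaussianReal μ v)) (hf'_int : Integrable f' (gaussianReal μ v))
    (hxf_int : Integrable (fun x ↦ (x - μ) * f x) (gaussianReal μ v)) :
    ∫ x, (x - μ) * f x ∂gaussianReal μ v = v * ∫ x, f' x ∂gaussianReal μ v := by
  rcases eq_or_ne v 0 with rfl | hv
  · simp
  have hv' : (v : ℝ) ≠ 0 := mod_cast hv
  rw [integrable_gaussianReal_iff hv] at hf_int hf'_int hxf_int
  have hparts := integral_mul_deriv_eq_deriv_mul_of_integrable (fun x _ ↦ hf x)
    (fun x _ ↦ hasDerivAt_gaussianPDFReal (μ := μ) hv x)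
    ((hxf_int.const_mul (-(v : ℝ)⁻¹)).congr (ae_of_all _ fun x ↦ by simp only [Pi.mul_apply]; ring))
    hf'_int hf_int
  simp only [integral_gaussianReal_eq_integral_smul hv, smul_eq_mul]
  calc ∫ x, gaussianPDFReal μ v x * ((x - μ) * f x)
      = -v * ∫ x, f x * (-((x - μ) / v) * gaussianPDFReal μ v x) := by
        rw [← integral_const_mul]
        congr with x
        field_simp
    _ = v * ∫ x, gaussianPDFReal μ v x * f' x := by
        rw [hparts, neg_mul_neg]
        simp only [mul_comm]

lemma integrable_pow_gaussianReal (n : ℕ) : Integrable (fun x ↦ x ^ n) (gaussianReal μ v) := by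
  rw [← integrable_norm_iff (by fun_prop)]
  simpa using (memLp_id_gaussianReal (μ := μ) (v := v) n).integrable_norm_pow'

lemma integral_pow_add_two_gaussianReal (n : ℕ) :
    ∫ x, x ^ (n + 2) ∂gaussianReal 0 v = v * ((n + 1) * ∫ x, x ^ n ∂gaussianReal 0 v) := by
  have hderiv (x : ℝ) : HasDerivAt (fun x ↦ x ^ (n + 1)) ((n + 1) * x ^ n) x := by
    simpa using hasDerivAt_pow (n + 1) x
  have hmul (x : ℝ) : (x - 0) * x ^ (n + 1) = x ^ (n + 2) := by ring
  have hstein := stein_identity_gaussianReal hderiv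
    (integrable_pow_gaussianReal (μ := 0) (v := v) _)
    ((integrable_pow_gaussianReal n).const_mul _)
    (by simpa only [hmul] using integrable_pow_gaussianReal _)
  simpa only [hmul, integral_const_mul] using hstein

lemma integral_sq_gaussianReal : ∫ x, x ^ 2 ∂gaussianReal 0 v = v := by
  simpa using integral_pow_add_two_gaussianReal (v := v) 0

lemma integral_pow_three_gaussianReal : ∫ x, x ^ 3 ∂gaussianReal 0 v = 0 := by
  simpa using integral_pow_add_two_gaussianReal (v := v) 1

lemma integral_pow_four_gaussianReal : ∫ x, x ^ 4 ∂gaussianReal 0 v = 3 * v ^ 2 := by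
  rw [integral_pow_add_two_gaussianReal 2, integral_sq_gaussianReal]
  push_cast
  ring

lemma memLp_two_quadratic_gaussianReal (a c : ℝ) :
    MemLp (fun x ↦ a * x ^ 2 + c * x) 2 (gaussianReal μ v) := by
  have hpow (n : ℕ) : MemLp (fun x : ℝ ↦ x ^ n) 2 (gaussianReal μ v) := by
    rw [memLp_two_iff_integrable_sq (by fun_prop)]
    simpa only [← pow_mul] using integrable_pow_gaussianReal (n * 2)
  exact ((hpow 2).const_mul a).add (by simpa only [pow_one] using (hpow 1).const_mul c)

lemma variance_quadratic_gaussianReal (a c : ℝ) :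
    Var[fun x ↦ a * x ^ 2 + c * x; gaussianReal 0 v] = 2 * a ^ 2 * v ^ 2 + c ^ 2 * v := by
  have hint (n : ℕ) (r : ℝ) : Integrable (fun x ↦ r * x ^ n) (gaussianReal 0 v) :=
    (integrable_pow_gaussianReal n).const_mul r
  have hmean : ∫ x, a * x ^ 2 + c * x ∂gaussianReal 0 v = a * v := by
    rw [integral_add (hint 2 a) (by simpa using hint 1 c), integral_const_mul,
      integral_const_mul c fun x ↦ x, integral_sq_gaussianReal, integral_id_gaussianReal, mul_zero,
      add_zero]
  have hsecond : ∫ x, (a * x ^ 2 + c * x) ^ 2 ∂gaussianReal 0 v =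
      3 * a ^ 2 * v ^ 2 + c ^ 2 * v := by
    calc ∫ x, (a * x ^ 2 + c * x) ^ 2 ∂gaussianReal 0 v
        = ∫ x, a ^ 2 * x ^ 4 + 2 * a * c * x ^ 3 + c ^ 2 * x ^ 2 ∂gaussianReal 0 v := by
          congr with x
          ring
      _ = 3 * a ^ 2 * v ^ 2 + c ^ 2 * v := by
          rw [integral_add (by exact (hint 4 _).add (hint 3 _)) (hint 2 _),
            integral_add (hint 4 _) (hint 3 _)]
          simp only [integral_const_mul, integral_sq_gaussianReal, integral_pow_three_gaussianReal,
            integral_pow_four_gaussianReal]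
          ring
  rw [variance_eq_sub (memLp_two_quadratic_gaussianReal a c)]
  simp only [Pi.pow_apply, hmean, hsecond]
  ring

end RealGaussian

lemma variance_sum_quadratic_pi_gaussianReal {ι : Type*} [Fintype ι] (v : ι → ℝ≥0) (a c : ι → ℝ) :
    Var[fun z ↦ ∑ i, (a i * z i ^ 2 + c i * z i); Measure.pi fun i ↦ gaussianReal 0 (v i)] =
      ∑ i, (2 * a i ^ 2 * v i ^ 2 + c i ^ 2 * v i) := by
  have h := variance_sum_pi (μ := fun i ↦ gaussianReal 0 (v i))
    fun i ↦ memLp_two_quadratic_gaussianReal (a i) (c i)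
  simpa only [variance_quadratic_gaussianReal, Finset.sum_fn] using h

lemma pi_withDensity_ofReal {ι : Type*} [Fintype ι] {X : ι → Type*} [∀ i, MeasurableSpace (X i)]
    {μ : ∀ i, Measure (X i)} [∀ i, SigmaFinite (μ i)] {f : ∀ i, X i → ℝ}
    (hf : ∀ i, Integrable (f i) (μ i)) (hf_nonneg : ∀ i x, 0 ≤ f i x) :
    Measure.pi (fun i ↦ (μ i).withDensity fun x ↦ ENNReal.ofReal (f i x)) =
      (Measure.pi μ).withDensity fun x ↦ ENNReal.ofReal (∏ i, f i (x i)) := by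
  refine Measure.pi_eq fun s hs ↦ ?_
  have hprod_int : Integrable (fun x ↦ ∏ i, f i (x i)) ((Measure.pi μ).restrict (Set.univ.pi s)) :=
    (Integrable.fintype_prod_dep hf).restrict
  rw [withDensity_apply _ (MeasurableSet.univ_pi hs),
    ← ofReal_integral_eq_lintegral_ofReal hprod_int
      (ae_of_all _ fun x ↦ Finset.prod_nonneg fun i _ ↦ hf_nonneg i _),
    Measure.restrict_pi_pi, integral_fintype_prod_eq_prod,
    ENNReal.ofReal_prod_of_nonneg fun i _ ↦ integral_nonneg (hf_nonneg i)]
  refine Finset.prod_congr rfl fun i _ ↦ ?_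
  rw [withDensity_apply _ (hs i), ofReal_integral_eq_lintegral_ofReal (hf i).restrict
    (ae_of_all _ (hf_nonneg i))]

lemma map_withDensity_comp {α β : Type*} [MeasurableSpace α] [MeasurableSpace β] (μ : Measure α)
    {f : α → β} (hf : Measurable f) {g : β → ENNReal} (hg : Measurable g) :
    (μ.withDensity (g ∘ f)).map f = (μ.map f).withDensity g := by
  ext s hs
  rw [Measure.map_apply hf hs, withDensity_apply _ (hf hs), withDensity_apply _ hs,
    setLIntegral_map hs hg hf]
  rfl

lemma map_const_add_mulVec_volume {ι : Type*} [Fintype ι] [DecidableEq ι] {L : Matrix ι ι ℝ}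
    (hL : L.det ≠ 0) (m : ι → ℝ) :
    (volume : Measure (ι → ℝ)).map (fun z ↦ m + L *ᵥ z) = ENNReal.ofReal |L.det⁻¹| • volume := by
  have hcomp : (fun z ↦ m + L *ᵥ z) = (m + ·) ∘ Matrix.toLin' L := by
    ext z
    simp
  rw [hcomp, ← Measure.map_map (by fun_prop)
    (LinearMap.continuous_of_finiteDimensional _).measurable,
    Real.map_matrix_volume_pi_eq_smul_volume_pi hL, Measure.map_smul, map_add_left_eq_self]

section GaussianMeasure

variable {d : ℕ} {S L : Matrix (Fin d) (Fin d) ℝ}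

/-- The Gaussian law `N(m, S)` on `ℝ^d`, given by its Lebesgue density `gaussianDensity m S`. It is
meaningful only for positive definite `S`; degenerate Gaussian laws are not covered. -/
noncomputable def gaussianMeasure (m : Fin d → ℝ) (S : Matrix (Fin d) (Fin d) ℝ) :
    Measure (Fin d → ℝ) :=
  volume.withDensity fun y ↦ ENNReal.ofReal (gaussianDensity m S y)

lemma continuous_gaussianDensity (m : Fin d → ℝ) (S : Matrix (Fin d) (Fin d) ℝ) :
    Continuous (gaussianDensity m S) := by
  unfold gaussianDensity
  fun_prop

lemma gaussianDensity_pos (hS : 0 < S.det) (m y : Fin d → ℝ) : 0 < gaussianDensity m S y := by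
  unfold gaussianDensity
  positivity

lemma integral_gaussianMeasure (hS : 0 < S.det) (m : Fin d → ℝ) (F : (Fin d → ℝ) → ℝ) :
    ∫ y, F y ∂gaussianMeasure m S = ∫ y, F y * gaussianDensity m S y := by
  rw [gaussianMeasure, integral_withDensity_eq_integral_toReal_smul
    (continuous_gaussianDensity m S).measurable.ennreal_ofReal (ae_of_all _ fun _ ↦ by simp)]
  simp only [ENNReal.toReal_ofReal (gaussianDensity_pos hS m _).le, smul_eq_mul, mul_comm]

lemma prod_gaussianPDFReal_eq_gaussianDensity (z : Fin d → ℝ) :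
    ∏ i, gaussianPDFReal 0 1 (z i) = gaussianDensity 0 1 z := by
  have hconst : (√(2 * Real.pi))⁻¹ ^ d = (2 * Real.pi) ^ (-(d : ℝ) / 2) := by
    rw [Real.sqrt_eq_rpow, ← Real.rpow_neg (by positivity), ← Real.rpow_natCast,
      ← Real.rpow_mul (by positivity)]
    ring_nf
  have hexponent : ∑ i, -z i ^ 2 / 2 = -(1 / 2) * (z ⬝ᵥ z) := by
    rw [dotProduct, Finset.mul_sum]
    exact Finset.sum_congr rfl fun i _ ↦ by ring
  simp only [gaussianPDFReal, gaussianDensity, Finset.prod_mul_distrib, ← Real.exp_sum,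
    Finset.prod_const, Finset.card_univ, Fintype.card_fin, NNReal.coe_one, mul_one, sub_zero,
    det_one, Real.one_rpow, inv_one, one_mulVec, hconst, hexponent]

lemma pi_gaussianReal_eq_gaussianMeasure :
    Measure.pi (fun _ : Fin d ↦ gaussianReal 0 1) = gaussianMeasure 0 1 := by
  simp only [gaussianReal_of_var_ne_zero 0 one_ne_zero, gaussianPDF_def]
  rw [pi_withDensity_ofReal (fun _ ↦ integrable_gaussianPDFReal 0 1)
    fun _ ↦ gaussianPDFReal_nonneg 0 1]
  simp only [prod_gaussianPDFReal_eq_gaussianDensity, gaussianMeasure, volume_pi]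

lemma gaussianDensity_affine (hS : 0 < S.det) (hL : L.det ≠ 0) (m μ z : Fin d → ℝ) :
    gaussianDensity (m + L *ᵥ μ) (L * S * Lᵀ) (m + L *ᵥ z) =
      |L.det|⁻¹ * gaussianDensity μ S z := by
  have hdet : (L * S * Lᵀ).det ^ (-(1 : ℝ) / 2) = |L.det|⁻¹ * S.det ^ (-(1 : ℝ) / 2) := by
    rw [det_mul, det_mul, det_transpose, mul_right_comm, ← sq, ← sq_abs,
      Real.mul_rpow (by positivity) hS.le, ← Real.rpow_natCast, ← Real.rpow_mul (abs_nonneg _),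
      ← Real.rpow_neg_one]
    norm_num
  have hconj : Lᵀ * (L * S * Lᵀ)⁻¹ * L = S⁻¹ := by
    have hLu : IsUnit L.det := hL.isUnit
    rw [Matrix.mul_inv_rev, Matrix.mul_inv_rev,
      mul_nonsing_inv_cancel_left _ _ (by rwa [det_transpose]),
      nonsing_inv_mul_cancel_right _ _ hLu]
  have hquad (x : Fin d → ℝ) :
      (L *ᵥ x) ⬝ᵥ (L * S * Lᵀ)⁻¹ *ᵥ (L *ᵥ x) = x ⬝ᵥ S⁻¹ *ᵥ x := by
    rw [dotProduct_comm, ← dotProduct_transpose_mulVec, mulVec_mulVec, mulVec_mulVec, hconj]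
  simp only [gaussianDensity, hdet, add_sub_add_left_eq_sub, ← mulVec_sub, hquad]
  ring

lemma map_affine_gaussianMeasure (hS : 0 < S.det) (hL : L.det ≠ 0) (m μ : Fin d → ℝ) :
    (gaussianMeasure μ S).map (fun z ↦ m + L *ᵥ z) =
      gaussianMeasure (m + L *ᵥ μ) (L * S * Lᵀ) := by
  have hpos : 0 < |L.det| := abs_pos.2 hL
  set g : (Fin d → ℝ) → ENNReal :=
    fun y ↦ ENNReal.ofReal (gaussianDensity (m + L *ᵥ μ) (L * S * Lᵀ) y)
  have hg : Measurable g := (continuous_gaussianDensity _ _).measurable.ennreal_ofReal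
  have hdensity : (fun z ↦ ENNReal.ofReal (gaussianDensity μ S z)) =
      (ENNReal.ofReal |L.det| • g) ∘ fun z ↦ m + L *ᵥ z := by
    ext z
    simp only [g, Function.comp_apply, Pi.smul_apply, smul_eq_mul, gaussianDensity_affine hS hL,
      ← ENNReal.ofReal_mul hpos.le, mul_inv_cancel_left₀ hpos.ne']
  rw [gaussianMeasure, hdensity, map_withDensity_comp _ (by fun_prop) (hg.const_smul _),
    map_const_add_mulVec_volume hL, withDensity_smul_measure, withDensity_smul _ hg, smul_smul,
    ← ENNReal.ofReal_mul (abs_nonneg _), abs_inv, inv_mul_cancel₀ hpos.ne', ENNReal.ofReal_one,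
    one_smul]
  rfl

lemma gaussianMeasure_eq_map_pi_gaussianReal (hL : L.det ≠ 0) (m : Fin d → ℝ) :
    gaussianMeasure m (L * Lᵀ) =
      (Measure.pi fun _ : Fin d ↦ gaussianReal 0 1).map (fun z ↦ m + L *ᵥ z) := by
  rw [pi_gaussianReal_eq_gaussianMeasure, map_affine_gaussianMeasure (by simp) hL]
  simp only [mulVec_zero, add_zero, mul_one]

end GaussianMeasure

lemma dotProduct_mulVec_comm_of_isSymm {ι R : Type*} [Fintype ι] [CommSemiring R] {M : Matrix ι ι R}
    (hM : M.IsSymm) (x y : ι → R) : x ⬝ᵥ M *ᵥ y = y ⬝ᵥ M *ᵥ x := by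
  rw [← dotProduct_transpose_mulVec, hM.eq]

open scoped MatrixOrder Matrix.Norms.L2Operator in
lemma exists_eq_mul_transpose {ι : Type*} [Fintype ι] {S : Matrix ι ι ℝ} (hS : S.PosSemidef) :
    ∃ B : Matrix ι ι ℝ, S = B * Bᵀ := by
  classical
  obtain ⟨B, hB⟩ := CStarAlgebra.nonneg_iff_eq_mul_star_self.1 hS.nonneg
  exact ⟨B, by rw [hB, star_eq_conjTranspose, conjTranspose_eq_transpose_of_trivial]⟩

section Congruence

variable {ι : Type*} [Fintype ι] [DecidableEq ι] {S A : Matrix ι ι ℝ}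

lemma exists_orthogonal_diagonal (hA : A.IsSymm) :
    ∃ (U : Matrix ι ι ℝ) (D : ι → ℝ), U * Uᵀ = 1 ∧ Uᵀ * A * U = diagonal D := by
  have hA' : A.IsHermitian := isHermitian_iff_isSymm.2 hA
  refine ⟨hA'.eigenvectorUnitary, hA'.eigenvalues, ?_, ?_⟩
  · simpa [star_eq_conjTranspose] using Unitary.coe_mul_star_self hA'.eigenvectorUnitary
  · simpa [Unitary.conjStarAlgAut_star_apply, star_eq_conjTranspose] using
      hA'.conjStarAlgAut_star_eigenvectorUnitary

lemma exists_congruence_diagonal (hS : S.PosSemidef) (hA : A.IsSymm) :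
    ∃ (L : Matrix ι ι ℝ) (D : ι → ℝ), L * Lᵀ = S ∧ Lᵀ * A * L = diagonal D := by
  obtain ⟨B, rfl⟩ := exists_eq_mul_transpose hS
  obtain ⟨U, D, hU, hD⟩ := exists_orthogonal_diagonal (A := Bᵀ * A * B) (by
    simp [IsSymm, transpose_mul, hA.eq, mul_assoc])
  refine ⟨B * U, D, ?_, ?_⟩
  · rw [transpose_mul, mul_assoc, ← mul_assoc U, hU, one_mul]
  · rw [← hD, transpose_mul]
    simp only [mul_assoc]

lemma det_ne_zero_of_posDef_mul_transpose {L : Matrix ι ι ℝ} (hL : (L * Lᵀ).PosDef) :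
    L.det ≠ 0 :=
  left_ne_zero_of_mul (det_mul L Lᵀ ▸ hL.det_pos.ne')

end Congruence

section QuadraticVariance

variable {d : ℕ} {S A : Matrix (Fin d) (Fin d) ℝ}

lemma isProbabilityMeasure_gaussianMeasure (hS : S.PosDef) (m : Fin d → ℝ) :
    IsProbabilityMeasure (gaussianMeasure m S) := by
  obtain ⟨L, rfl⟩ := exists_eq_mul_transpose hS.posSemidef
  rw [gaussianMeasure_eq_map_pi_gaussianReal (det_ne_zero_of_posDef_mul_transpose hS)]
  exact Measure.isProbabilityMeasure_map (by fun_prop)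

lemma variance_quadratic_gaussianMeasure (hS : S.PosDef) (hA : A.IsSymm) (m c : Fin d → ℝ) :
    Var[fun y ↦ 1 / 2 * ((y - m) ⬝ᵥ A *ᵥ (y - m)) + c ⬝ᵥ (y - m); gaussianMeasure m S] =
      1 / 2 * ((A * S) ^ 2).trace + c ⬝ᵥ S *ᵥ c := by
  obtain ⟨L, D, rfl, hD⟩ := exists_congruence_diagonal hS.posSemidef hA
  have hquad (z : Fin d → ℝ) : (L *ᵥ z) ⬝ᵥ A *ᵥ (L *ᵥ z) = ∑ i, D i * z i ^ 2 := by
    rw [dotProduct_comm, ← dotProduct_transpose_mulVec, mulVec_mulVec, mulVec_mulVec, hD]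
    exact Finset.sum_congr rfl fun i _ ↦ by rw [mulVec_diagonal]; ring
  have hlin (z : Fin d → ℝ) : c ⬝ᵥ (L *ᵥ z) = ∑ i, (Lᵀ *ᵥ c) i * z i := by
    rw [← dotProduct_transpose_mulVec, dotProduct_comm, dotProduct]
  have htrace : ((A * (L * Lᵀ)) ^ 2).trace = ∑ i, D i ^ 2 := by
    calc ((A * (L * Lᵀ)) ^ 2).trace
        = (A * L * (Lᵀ * A * L * Lᵀ)).trace := by simp only [sq, mul_assoc]
      _ = (Lᵀ * A * L * (Lᵀ * A * L)).trace := by rw [trace_mul_comm]; simp only [mul_assoc]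
      _ = ∑ i, D i ^ 2 := by rw [hD, diagonal_mul_diagonal, trace_diagonal]; simp only [sq]
  have hcov : c ⬝ᵥ (L * Lᵀ) *ᵥ c = ∑ i, (Lᵀ *ᵥ c) i ^ 2 := by
    rw [← mulVec_mulVec, hlin]
    simp only [sq]
  rw [gaussianMeasure_eq_map_pi_gaussianReal (det_ne_zero_of_posDef_mul_transpose hS),
    variance_map (by fun_prop) (by fun_prop)]
  calc Var[_; Measure.pi fun _ ↦ gaussianReal 0 1]
      = Var[fun z ↦ ∑ i, (D i / 2 * z i ^ 2 + (Lᵀ *ᵥ c) i * z i);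
          Measure.pi fun _ ↦ gaussianReal 0 1] := by
        congr 1 with z
        simp only [Function.comp_apply, add_sub_cancel_left, hquad, hlin, Finset.mul_sum,
          Finset.sum_add_distrib]
        ring_nf
    _ = 1 / 2 * ((A * (L * Lᵀ)) ^ 2).trace + c ⬝ᵥ (L * Lᵀ) *ᵥ c := by
        rw [variance_sum_quadratic_pi_gaussianReal fun _ ↦ 1, htrace, hcov, Finset.mul_sum,
          ← Finset.sum_add_distrib]
        refine Finset.sum_congr rfl fun i _ ↦ ?_
        simp only [NNReal.coe_one]
        ring

end QuadraticVariance

section Score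

variable {d : ℕ} {S S₀ S₁ : Matrix (Fin d) (Fin d) ℝ}

lemma log_gaussianDensity_eq_add (hS : S.PosDef) (m x y : Fin d → ℝ) :
    Real.log (gaussianDensity m S y) = Real.log (gaussianDensity m S x) -
      (1 / 2 * ((y - x) ⬝ᵥ S⁻¹ *ᵥ (y - x)) + (S⁻¹ *ᵥ (x - m)) ⬝ᵥ (y - x)) := by
  have hdet := hS.det_pos
  have hconst : (2 * Real.pi) ^ (-(d : ℝ) / 2) * S.det ^ (-(1 : ℝ) / 2) ≠ 0 := by positivity
  have hsymm : S⁻¹.IsSymm := isHermitian_iff_isSymm.1 hS.inv.isHermitian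
  have hsplit : y - m = y - x + (x - m) := by abel
  simp only [gaussianDensity, Real.log_mul hconst (Real.exp_ne_zero _), Real.log_exp, hsplit,
    mulVec_add, dotProduct_add, add_dotProduct, dotProduct_comm (S⁻¹ *ᵥ (x - m)),
    dotProduct_mulVec_comm_of_isSymm hsymm (x - m) (y - x)]
  ring

lemma genScore_eq_add (hS₀ : S₀.PosDef) (hS₁ : S₁.PosDef) (m₀ m₁ : Fin d → ℝ) (h : ℝ)
    (y : Fin d → ℝ) :
    genScore m₀ m₁ S₀ S₁ h y = genScore m₀ m₁ S₀ S₁ h m₀ +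
      -(1 / h) * (1 / 2 * ((y - m₀) ⬝ᵥ (S₁⁻¹ - S₀⁻¹) *ᵥ (y - m₀)) +
        (S₁⁻¹ *ᵥ (m₀ - m₁)) ⬝ᵥ (y - m₀)) := by
  have hlog (x : Fin d → ℝ) : Real.log (gaussianDensity m₁ S₁ x / gaussianDensity m₀ S₀ x) =
      Real.log (gaussianDensity m₁ S₁ x) - Real.log (gaussianDensity m₀ S₀ x) :=
    Real.log_div (gaussianDensity_pos hS₁.det_pos m₁ x).ne'
      (gaussianDensity_pos hS₀.det_pos m₀ x).ne'
  rw [genScore, genScore, hlog, hlog, log_gaussianDensity_eq_add hS₁ m₁ m₀ y,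
    log_gaussianDensity_eq_add hS₀ m₀ m₀ y, sub_self, mulVec_zero, zero_dotProduct, sub_mulVec,
    dotProduct_sub (y - m₀)]
  ring

lemma continuous_genScore (hS₀ : S₀.PosDef) (hS₁ : S₁.PosDef) (m₀ m₁ : Fin d → ℝ) (h : ℝ) :
    Continuous (genScore m₀ m₁ S₀ S₁ h) := by
  rw [funext (genScore_eq_add hS₀ hS₁ m₀ m₁ h)]
  fun_prop

lemma variance_genScore (hS₀ : S₀.PosDef) (hS₁ : S₁.PosDef) (m₀ m₁ : Fin d → ℝ) (h : ℝ) :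
    Var[genScore m₀ m₁ S₀ S₁ h; gaussianMeasure m₀ S₀] =
      1 / h ^ 2 * (1 / 2 * (((S₁⁻¹ - S₀⁻¹) * S₀) ^ 2).trace +
        (S₁⁻¹ *ᵥ (m₀ - m₁)) ⬝ᵥ S₀ *ᵥ (S₁⁻¹ *ᵥ (m₀ - m₁))) := by
  have := isProbabilityMeasure_gaussianMeasure hS₀ m₀
  have hsymm : (S₁⁻¹ - S₀⁻¹).IsSymm :=
    isHermitian_iff_isSymm.1 (hS₁.inv.isHermitian.sub hS₀.inv.isHermitian)
  rw [funext (genScore_eq_add hS₀ hS₁ m₀ m₁ h),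
    variance_const_add (Continuous.aestronglyMeasurable (by fun_prop)), variance_const_mul,
    variance_quadratic_gaussianMeasure hS₀ hsymm, neg_sq, div_pow, one_pow]

end Score

lemma sub_dotProduct_mulVec_sub_of_isSymm {ι R : Type*} [Fintype ι] [CommRing R]
    {S A : Matrix ι ι R} (hS : S.IsSymm) (hA : A.IsSymm) (b m : ι → R) :
    (A *ᵥ m - b) ⬝ᵥ S *ᵥ (A *ᵥ m - b) =
      b ⬝ᵥ S *ᵥ b + m ⬝ᵥ A *ᵥ (S *ᵥ (A *ᵥ m)) - 2 * (m ⬝ᵥ A *ᵥ (S *ᵥ b)) := by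
  have hmove (x : ι → R) : m ⬝ᵥ A *ᵥ x = (A *ᵥ m) ⬝ᵥ x := by
    rw [dotProduct_mulVec_comm_of_isSymm hA, dotProduct_comm]
  simp only [hmove, mulVec_sub, dotProduct_sub, sub_dotProduct,
    dotProduct_mulVec_comm_of_isSymm hS b (A *ᵥ m)]
  ring

theorem generalized_fisher_information
    {d : ℕ} (m₀ m₁ : Fin d → ℝ) (S₀ S₁ : Matrix (Fin d) (Fin d) ℝ)
    (hS₀ : S₀.PosDef) (hS₁ : S₁.PosDef) (h : ℝ) (hh : h ≠ 0)
    (A : Matrix (Fin d) (Fin d) ℝ) (b : Fin d → ℝ)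
    (hA : A = S₁⁻¹ - S₀⁻¹)
    (hb : b = S₁⁻¹.mulVec m₁ - S₀⁻¹.mulVec m₀) :
    ∫ y : Fin d → ℝ,
        (genScore m₀ m₁ S₀ S₁ h y -
          ∫ z : Fin d → ℝ, genScore m₀ m₁ S₀ S₁ h z * gaussianDensity m₀ S₀ z) ^ 2 *
          gaussianDensity m₀ S₀ y =
      (1 / h ^ 2) * ((1 / 2) * ((A * S₀) ^ 2).trace + b ⬝ᵥ S₀.mulVec b +
        m₀ ⬝ᵥ A.mulVec (S₀.mulVec (A.mulVec m₀)) -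
        2 * (m₀ ⬝ᵥ A.mulVec (S₀.mulVec b))) := by
  have hA_symm : A.IsSymm := hA ▸
    isHermitian_iff_isSymm.1 (hS₁.inv.isHermitian.sub hS₀.inv.isHermitian)
  have hS₀_symm : S₀.IsSymm := isHermitian_iff_isSymm.1 hS₀.isHermitian
  have hlinear : S₁⁻¹ *ᵥ (m₀ - m₁) = A *ᵥ m₀ - b := by
    rw [hA, hb, sub_mulVec, mulVec_sub]
    abel
  rw [← integral_gaussianMeasure hS₀.det_pos, ← integral_gaussianMeasure hS₀.det_pos,
    ← variance_eq_integral (continuous_genScore hS₀ hS₁ m₀ m₁ h).aemeasurable,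
    variance_genScore hS₀ hS₁, hlinear, ← hA, sub_dotProduct_mulVec_sub_of_isSymm hS₀_symm hA_symm]
  ring
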